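/- arXiv:2303.08102 — 7 statements merged into one kernel-verified Lean document; each statement's English description precedes it below -/
import Mathlib

section
/- The three similarity indices satisfy the chain of inequalities TV(Θ) ≤ S*(Θ) ≤ S(Θ), where TV(Θ) is computed from any enumeration of Θ. -/
open Finset

noncomputable section

/-- `p` is a probability vector on the arm set `Fin K`. -/
def IsProbVec {K : ℕ} (p : Fin K → ℝ) : Prop :=
  (∀ j, 0 ≤ p j) ∧ ∑ j, p j = 1

/-- `S(Θ) = ∑_j max_θ θ(j)`. -/
def polS (K N : ℕ) (θ : ℕ → Fin K → ℝ) : ℝ :=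
  ∑ j, ⨆ i : Fin N, θ i j

/-- `S*(Θ) = ∑_j (max_θ θ(j) - min_θ θ(j))`. -/
def polSstar (K N : ℕ) (θ : ℕ → Fin K → ℝ) : ℝ :=
  ∑ j, ((⨆ i : Fin N, θ i j) - ⨅ i : Fin N, θ i j)

/-- `TV(Θ)` computed from the enumeration `θ 0, …, θ (N-1)`. -/
def polTV (K N : ℕ) (θ : ℕ → Fin K → ℝ) : ℝ :=
  ∑ i ∈ Finset.Ico 1 N, ∑ j, max (θ i j - ⨆ k : Fin i, θ (k : ℕ) j) 0

theorem tv_aux (f : ℕ → ℝ) (N : ℕ) (hN : 1 ≤ N) :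
    ∑ i ∈ Finset.Ico 1 N, max (f i - ⨆ k : Fin i, f (k : ℕ)) 0
      ≤ (⨆ i : Fin N, f (i : ℕ)) - f 0 := by
  induction N, hN using Nat.le_induction with
  | base => simp
  | succ n hn ih =>
    rw [Finset.sum_Ico_succ_top hn]
    have bdd : BddAbove (Set.range fun i : Fin (n + 1) => f (i : ℕ)) :=
      (Set.finite_range _).bddAbove
    have h1 : f n ≤ ⨆ i : Fin (n + 1), f (i : ℕ) := le_ciSup bdd (Fin.last n)
    have h2 : (⨆ i : Fin n, f (i : ℕ)) ≤ ⨆ i : Fin (n + 1), f (i : ℕ) := by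
      have : Nonempty (Fin n) := ⟨⟨0, hn⟩⟩
      exact ciSup_le fun i => le_ciSup bdd i.castSucc
    have h3 : max (f n - ⨆ k : Fin n, f (k : ℕ)) 0
        ≤ (⨆ i : Fin (n + 1), f (i : ℕ)) - ⨆ i : Fin n, f (i : ℕ) :=
      max_le (by linarith) (by linarith)
    linarith

/-- `TV(Θ) ≤ S*(Θ) ≤ S(Θ)`, where `TV(Θ)` is computed from any enumeration of `Θ`. -/
theorem TV_le_Sstar_le_S {K N : ℕ} (hK : 1 ≤ K) (hN : 1 ≤ N)
    (θ : ℕ → Fin K → ℝ) (hθ : ∀ i < N, IsProbVec (θ i)) :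
    polTV K N θ ≤ polSstar K N θ ∧ polSstar K N θ ≤ polS K N θ := by
  constructor
  · unfold polTV polSstar
    rw [Finset.sum_comm]
    refine Finset.sum_le_sum fun j _ => ?_
    have h := tv_aux (fun i => θ i j) N hN
    have h0 : (⨅ i : Fin N, θ i j) ≤ θ 0 j :=
      ciInf_le (Set.finite_range fun i : Fin N => θ i j).bddBelow ⟨0, hN⟩
    linarith
  · unfold polS polSstar
    refine Finset.sum_le_sum fun j _ => ?_
    have h0 : 0 ≤ ⨅ i : Fin N, θ i j := Real.iInf_nonneg fun i => (hθ i i.2).1 j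
    linarith
end
end

section
/- For every probability vector τ on [K], S(Θ) − 1 ≤ Σ_{θ∈Θ} D_TV(θ, τ); equivalently, TV(Θ) ≤ min over probability vectors τ of Σ_{θ∈Θ} D_TV(θ, τ). -/
open Finset

noncomputable section

/-- Total variation distance between probability vectors on `Fin K`. -/
def Dtv {K : ℕ} (p q : Fin K → ℝ) : ℝ :=
  (1 / 2) * ∑ j, |p j - q j|

lemma sup_succ_aux (f : ℕ → ℝ) (n : ℕ) (hn : 1 ≤ n) :
    (⨆ i : Fin (n+1), f i) = (⨆ i : Fin n, f i) + max (f n - ⨆ i : Fin n, f i) 0 := by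
  haveI : Nonempty (Fin n) := ⟨⟨0, hn⟩⟩
  have b1 : BddAbove (Set.range fun i : Fin n => f i) := (Set.finite_range _).bddAbove
  have b2 : BddAbove (Set.range fun i : Fin (n+1) => f i) := (Set.finite_range _).bddAbove
  have e : (⨆ i : Fin n, f i) + max (f n - ⨆ i : Fin n, f i) 0
      = max (f n) (⨆ i : Fin n, f i) := by
    rw [← max_add_add_left]; congr 1 <;> ring
  rw [e]
  apply le_antisymm
  · apply ciSup_le
    rintro ⟨i, hi⟩
    rcases Nat.lt_succ_iff_lt_or_eq.mp hi with h | h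
    · exact le_max_of_le_right (le_ciSup b1 ⟨i, h⟩)
    · subst h; exact le_max_left _ _
  · apply max_le
    · exact le_ciSup b2 ⟨n, Nat.lt_succ_self n⟩
    · apply ciSup_le
      rintro ⟨i, hi⟩
      exact le_ciSup b2 ⟨i, Nat.lt_succ_of_lt hi⟩

lemma polTV_aux {K : ℕ} (θ : ℕ → Fin K → ℝ) (h0 : IsProbVec (θ 0)) (N : ℕ) (hN : 1 ≤ N) :
    polTV K N θ = polS K N θ - 1 := by
  induction N, hN using Nat.le_induction with
  | base =>
    have := h0.2
    simp [polTV, polS, this]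
  | succ n hn ih =>
    unfold polTV polS at *
    rw [Finset.sum_Ico_succ_top hn, ih,
      Finset.sum_congr rfl (fun j _ => sup_succ_aux (fun i => θ i j) n hn),
      Finset.sum_add_distrib]
    ring

lemma Dtv_aux {K : ℕ} (p q : Fin K → ℝ) (hp : IsProbVec p) (hq : IsProbVec q) :
    Dtv p q = ∑ j, max (p j - q j) 0 := by
  have h : ∀ j, max (p j - q j) 0 = (1/2) * |p j - q j| + (1/2) * (p j - q j) := by
    intro j
    rcases le_total (p j - q j) 0 with h | h
    · rw [max_eq_right h, abs_of_nonpos h]; ring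
    · rw [max_eq_left h, abs_of_nonneg h]; ring
  rw [Finset.sum_congr rfl (fun j _ => h j), Finset.sum_add_distrib, ← Finset.mul_sum,
    ← Finset.mul_sum, Finset.sum_sub_distrib, hp.2, hq.2]
  simp [Dtv]

/-- For every probability vector `τ` on `[K]`, `S(Θ) - 1 ≤ ∑_θ D_TV(θ,τ)`;
equivalently `TV(Θ) ≤ min_τ ∑_θ D_TV(θ,τ)`. -/
theorem S_sub_one_le_sum_tv {K N : ℕ} (hK : 1 ≤ K) (hN : 1 ≤ N)
    (θ : ℕ → Fin K → ℝ) (hθ : ∀ i < N, IsProbVec (θ i))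
    (τ : Fin K → ℝ) (hτ : IsProbVec τ) :
    polS K N θ - 1 ≤ ∑ i ∈ Finset.range N, Dtv (θ i) τ ∧
    polTV K N θ ≤ ∑ i ∈ Finset.range N, Dtv (θ i) τ := by
  have key : polS K N θ - 1 ≤ ∑ i ∈ Finset.range N, Dtv (θ i) τ := by
    haveI : Nonempty (Fin N) := ⟨⟨0, hN⟩⟩
    rw [Finset.sum_congr rfl (fun i hi =>
      Dtv_aux (θ i) τ (hθ i (Finset.mem_range.mp hi)) hτ), Finset.sum_comm,
      sub_le_iff_le_add, ← hτ.2, ← Finset.sum_add_distrib]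
    unfold polS
    apply Finset.sum_le_sum
    intro j _
    apply ciSup_le
    rintro ⟨i, hi⟩
    have h1 := Finset.single_le_sum (f := fun i => max (θ i j - τ j) 0)
      (fun i _ => le_max_right _ _) (Finset.mem_range.mpr hi)
    have h2 := le_max_left (θ i j - τ j) 0
    simp only at h1 ⊢
    linarith
  refine ⟨key, ?_⟩
  rw [polTV_aux θ (hθ 0 hN) N hN]
  exact key
end
end

section
/- Let P be a probability distribution on Θ, let ℓ ∈ [0,1]^K be a loss vector, and write ψ(j) = Σ_{θ∈Θ} P(θ)θ(j) and q(j) = min_{θ∈Θ} θ(j). Then the expected second moment of the shifted importance-weighted loss estimates satisfies Σ_{j: ψ(j)>0} ψ(j) · [Σ_{θ∈Θ} P(θ)(θ(j) − q(j))² ℓ(j)² / ψ(j)²] ≤ S*(Θ). -/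
open Finset

noncomputable section

/-- For a probability distribution `P` over the policies and losses `ℓ ∈ [0,1]^K`,
writing `ψ(j) = ∑_θ P(θ)θ(j)` and `q(j) = min_θ θ(j)`, the expected second moment of
the shifted importance-weighted loss estimates is at most
`S*(Θ) = ∑_j (max_θ θ(j) - min_θ θ(j))`. -/
theorem second_moment_le_Sstar {K N : ℕ} (hN : 1 ≤ N)
    (θ : Fin N → Fin K → ℝ) (hθ : ∀ i, IsProbVec (θ i))
    (P : Fin N → ℝ) (hP0 : ∀ i, 0 ≤ P i) (hP1 : ∑ i, P i = 1)
    (ℓ : Fin K → ℝ) (hℓ : ∀ j, ℓ j ∈ Set.Icc (0 : ℝ) 1) :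
    ∑ j ∈ Finset.univ.filter (fun j : Fin K => 0 < ∑ i, P i * θ i j),
        (∑ i, P i * θ i j) *
          (∑ i, P i * (θ i j - ⨅ k : Fin N, θ k j) ^ 2 * (ℓ j) ^ 2 / (∑ i, P i * θ i j) ^ 2) ≤
      ∑ j, ((⨆ i : Fin N, θ i j) - ⨅ i : Fin N, θ i j) := by
  have : Nonempty (Fin N) := ⟨⟨0, hN⟩⟩
  have hq : ∀ i j, (⨅ k : Fin N, θ k j) ≤ θ i j := fun i j =>
    ciInf_le (Set.finite_range (fun k => θ k j)).bddBelow i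
  have hM : ∀ i j, θ i j ≤ ⨆ k : Fin N, θ k j := fun i j =>
    le_ciSup (Set.finite_range (fun k => θ k j)).bddAbove i
  have hq0 : ∀ j, 0 ≤ ⨅ k : Fin N, θ k j := fun j => le_ciInf fun i => (hθ i).1 j
  refine (Finset.sum_le_sum (fun j hj => ?_)).trans
    (Finset.sum_le_sum_of_subset_of_nonneg (Finset.filter_subset _ _) fun j _ _ =>
      sub_nonneg.2 ((hq ⟨0, hN⟩ j).trans (hM ⟨0, hN⟩ j)))
  have hpos := (Finset.mem_filter.1 hj).2
  set ψ := ∑ i, P i * θ i j with hψ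
  set q := ⨅ k : Fin N, θ k j with hqd
  set M := ⨆ k : Fin N, θ k j with hMd
  rw [← Finset.sum_div]
  have key : ∑ i, P i * (θ i j - q) ^ 2 * (ℓ j) ^ 2 ≤ ψ * (M - q) := by
    rw [hψ, Finset.sum_mul]
    refine Finset.sum_le_sum fun i _ => ?_
    have h1 := hq i j
    have h2 := hM i j
    have h3 := hq0 j
    have hl : (ℓ j) ^ 2 ≤ 1 := pow_le_one₀ (hℓ j).1 (hℓ j).2
    have h4 : (θ i j - q) ^ 2 ≤ θ i j * (M - q) := by
      rw [sq]
      exact mul_le_mul (by linarith) (by linarith) (by linarith) ((hθ i).1 j)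
    calc P i * (θ i j - q) ^ 2 * (ℓ j) ^ 2 ≤ P i * (θ i j - q) ^ 2 :=
          mul_le_of_le_one_right (mul_nonneg (hP0 i) (sq_nonneg _)) hl
      _ ≤ P i * (θ i j * (M - q)) := mul_le_mul_of_nonneg_left h4 (hP0 i)
      _ = P i * θ i j * (M - q) := by ring
  rw [← mul_div_assoc, div_le_iff₀ (by positivity)]
  calc _ ≤ ψ * (ψ * (M - q)) := mul_le_mul_of_nonneg_left key hpos.le
    _ = _ := by ring
end
end

section
/- Let ū = (1/N) Σ_{θ∈Θ} θ be the uniform mixture of the policies. If there is a constant r ≥ 0 such that D(θ‖ū) = r for every θ ∈ Θ, then for every probability vector τ on [K] one has max_{θ∈Θ} D(θ‖τ) ≥ r, and hence D*(Θ) = r (the infimum is attained at ū). -/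
open Finset

noncomputable section

/-- KL-divergence `D(p‖q) = ∑_{j : p(j)>0} p(j) log (p(j)/q(j))`, equal to `+∞` if
`p(j) > 0` for some `j` with `q(j) = 0`. -/
def KL {K : ℕ} (p q : Fin K → ℝ) : ENNReal :=
  if ∀ j, q j = 0 → p j = 0 then
    ENNReal.ofReal (∑ j ∈ Finset.univ.filter (fun j : Fin K => 0 < p j),
      p j * Real.log (p j / q j))
  else ⊤

/-- `D*(Θ) = inf_{τ ∈ Δ_{K-1}} max_{θ ∈ Θ} D(θ‖τ)`. -/
def Dstar (K N : ℕ) (θ : ℕ → Fin K → ℝ) : ENNReal :=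
  ⨅ τ : {τ : Fin K → ℝ // IsProbVec τ}, ⨆ i ∈ Finset.range N, KL (θ i) τ.1

def GG {K : ℕ} (p q : Fin K → ℝ) : ℝ := ∑ j, p j * Real.log (p j / q j)

theorem KL_eq_GG {K : ℕ} {p q : Fin K → ℝ} (hp : IsProbVec p)
    (h : ∀ j, q j = 0 → p j = 0) : KL p q = ENNReal.ofReal (GG p q) := by
  unfold KL GG
  rw [if_pos h]
  congr 1
  apply Finset.sum_subset (Finset.subset_univ _)
  intro j _ hj
  have h1 : ¬ 0 < p j := by simpa using hj
  have : p j = 0 := le_antisymm (not_lt.mp h1) (hp.1 j)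
  simp [this]

theorem GG_nonneg {K : ℕ} {p q : Fin K → ℝ} (hp : IsProbVec p) (hq : IsProbVec q)
    (h : ∀ j, q j = 0 → p j = 0) : 0 ≤ GG p q := by
  have h1 : ∑ j, (p j - q j) ≤ GG p q := by
    apply Finset.sum_le_sum
    intro j _
    rcases (hp.1 j).eq_or_lt with h0 | h0
    · rw [← h0]; simpa using hq.1 j
    · have hq0 : 0 < q j := lt_of_le_of_ne (hq.1 j) (fun e => h0.ne' (h j e.symm))
      have h2 := Real.log_le_sub_one_of_pos (div_pos hq0 h0)
      have h3 : Real.log (p j / q j) = - Real.log (q j / p j) := by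
        rw [← Real.log_inv, inv_div]
      rw [h3]
      have h4 := mul_le_mul_of_nonneg_left h2 h0.le
      have h5 : p j * (q j / p j - 1) = q j - p j := by field_simp
      linarith
  rw [Finset.sum_sub_distrib, hp.2, hq.2] at h1
  linarith

/-- If the KL-divergence of every policy from the uniform mixture `ū = (1/N)∑_θ θ`
equals a common constant `r ≥ 0`, then every probability vector `τ` satisfies
`max_θ D(θ‖τ) ≥ r`, hence `D*(Θ) = r` (the infimum is attained at `ū`). -/
theorem Dstar_eq_of_symmetric {K N : ℕ} (hK : 1 ≤ K) (hN : 1 ≤ N)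
    (θ : ℕ → Fin K → ℝ) (hθ : ∀ i < N, IsProbVec (θ i))
    (r : ℝ) (hr : 0 ≤ r)
    (hsym : ∀ i < N,
      KL (θ i) (fun j => (1 / (N : ℝ)) * ∑ k ∈ Finset.range N, θ k j) =
        ENNReal.ofReal r) :
    (∀ τ : Fin K → ℝ, IsProbVec τ →
      ENNReal.ofReal r ≤ ⨆ i ∈ Finset.range N, KL (θ i) τ) ∧
    Dstar K N θ = ENNReal.ofReal r := by
  have hNp : (0 : ℝ) < N := by exact_mod_cast hN
  set u : Fin K → ℝ := fun j => (1 / (N : ℝ)) * ∑ k ∈ Finset.range N, θ k j with hu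
  have hNu : ∀ j, ∑ k ∈ Finset.range N, θ k j = N * u j := by
    intro j; simp only [hu]; field_simp
  have hup : IsProbVec u := by
    refine ⟨fun j => mul_nonneg (by positivity)
      (Finset.sum_nonneg fun k hk => (hθ k (Finset.mem_range.mp hk)).1 j), ?_⟩
    simp only [hu]
    rw [← Finset.mul_sum, Finset.sum_comm,
      Finset.sum_congr rfl (fun k hk => (hθ k (Finset.mem_range.mp hk)).2)]
    simp [hNp.ne']
  have hac : ∀ i < N, ∀ j, u j = 0 → θ i j = 0 := by
    intro i hi j hj
    have h1 := hNu j
    rw [hj, mul_zero, Finset.sum_eq_zero_iff_of_nonneg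
      (fun k hk => (hθ k (Finset.mem_range.mp hk)).1 j)] at h1
    exact h1 i (Finset.mem_range.mpr hi)
  have hG : ∀ i < N, GG (θ i) u = r := by
    intro i hi
    have h1 := hsym i hi
    rw [KL_eq_GG (hθ i hi) (hac i hi)] at h1
    exact (ENNReal.ofReal_eq_ofReal_iff (GG_nonneg (hθ i hi) hup (hac i hi)) hr).mp h1
  have main : ∀ τ : Fin K → ℝ, IsProbVec τ →
      ENNReal.ofReal r ≤ ⨆ i ∈ Finset.range N, KL (θ i) τ := by
    intro τ hτ
    by_cases hA : ∀ i < N, ∀ j, τ j = 0 → θ i j = 0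
    · have huτ : ∀ j, τ j = 0 → u j = 0 := by
        intro j hj
        have h1 := hNu j
        rw [Finset.sum_eq_zero (fun k hk => hA k (Finset.mem_range.mp hk) j hj)] at h1
        rcases mul_eq_zero.mp h1.symm with h | h
        · exact absurd h hNp.ne'
        · exact h
      have hsum : ∑ i ∈ Finset.range N, GG (θ i) τ
          = ∑ i ∈ Finset.range N, GG (θ i) u + N * GG u τ := by
        have e : (N : ℝ) * GG u τ
            = ∑ i ∈ Finset.range N, ∑ j, θ i j * Real.log (u j / τ j) := by
          rw [Finset.sum_comm]
          unfold GG
          rw [Finset.mul_sum]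
          refine Finset.sum_congr rfl fun j _ => ?_
          rw [← Finset.sum_mul, hNu j]; exact (mul_assoc _ _ _).symm
        rw [e, ← Finset.sum_add_distrib]
        refine Finset.sum_congr rfl fun i hi => ?_
        unfold GG
        rw [← Finset.sum_add_distrib]
        refine Finset.sum_congr rfl fun j _ => ?_
        have hi' := Finset.mem_range.mp hi
        by_cases h0 : θ i j = 0
        · simp [h0]
        · have hu0 : u j ≠ 0 := fun e => h0 (hac i hi' j e)
          have ht0 : τ j ≠ 0 := fun e => h0 (hA i hi' j e)
          rw [Real.log_div h0 ht0, Real.log_div h0 hu0, Real.log_div hu0 ht0]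
          ring
      have hge := mul_nonneg hNp.le (GG_nonneg hup hτ huτ)
      have hle : ∑ i ∈ Finset.range N, r ≤ ∑ i ∈ Finset.range N, GG (θ i) τ := by
        rw [hsum, Finset.sum_congr rfl (fun i hi => hG i (Finset.mem_range.mp hi))]
        linarith
      obtain ⟨i, hi, hri⟩ := Finset.exists_le_of_sum_le
        (Finset.nonempty_range_iff.mpr (by omega)) hle
      have hi' := Finset.mem_range.mp hi
      refine le_trans ?_ (le_iSup₂ (f := fun i (_ : i ∈ Finset.range N) => KL (θ i) τ) i hi)
      rw [KL_eq_GG (hθ i hi') (hA i hi')]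
      exact ENNReal.ofReal_le_ofReal hri
    · push Not at hA
      obtain ⟨i, hi, j, hj, hne⟩ := hA
      refine le_trans ?_ (le_iSup₂ (f := fun i (_ : i ∈ Finset.range N) => KL (θ i) τ) i
        (Finset.mem_range.mpr hi))
      have : KL (θ i) τ = ⊤ := by
        unfold KL
        exact if_neg fun h => hne (h j hj)
      simp [this]
  refine ⟨main, le_antisymm ?_ (le_iInf fun τ => main τ.1 τ.2)⟩
  refine (iInf_le _ (⟨u, hup⟩ : {τ : Fin K → ℝ // IsProbVec τ})).trans ?_
  exact iSup₂_le fun i hi => (hsym i (Finset.mem_range.mp hi)).le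
end
end

section
/- For the ε-uniform structure with K ≥ 2 and 0 ≤ ε ≤ 1, D*(Θ) = ((K−1)/K)(1−ε)log(1−ε) + ((1+ε(K−1))/K)·log(1+ε(K−1)) (with the convention 0·log 0 = 0), and the infimum defining D*(Θ) is attained at the uniform distribution on [K]. -/
open Finset

noncomputable section

/-- `D*(Θ) = inf_{τ ∈ Δ_{K-1}} max_{θ ∈ Θ} D(θ‖τ)` for a family of policies indexed by
`Fin N`. -/
def DstarF {K N : ℕ} (θ : Fin N → Fin K → ℝ) : ENNReal :=
  ⨅ τ : {τ : Fin K → ℝ // IsProbVec τ}, ⨆ a : Fin N, KL (θ a) τ.1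


lemma KL_filter {K : ℕ} (p q : Fin K → ℝ) (hp : ∀ j, 0 ≤ p j) :
    (∑ j ∈ Finset.univ.filter (fun j : Fin K => 0 < p j), p j * Real.log (p j / q j))
      = ∑ j, p j * Real.log (p j / q j) := by
  apply Finset.sum_filter_of_ne
  intro j _ h
  rcases (hp j).lt_or_eq with h1 | h1
  · exact h1
  · rw [← h1] at h; simp at h

lemma sum_unif {K : ℕ} (hK : 2 ≤ K) (ε : ℝ) (a : Fin K) :
    ∑ j : Fin K, ((1 - ε) / K + if j = a then ε else 0) *
      Real.log (((1 - ε) / K + if j = a then ε else 0) / ((1 : ℝ) / K)) =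
    (((K : ℝ) - 1) / K) * (1 - ε) * Real.log (1 - ε) +
        ((1 + ε * ((K : ℝ) - 1)) / K) * Real.log (1 + ε * ((K : ℝ) - 1)) := by
  have hK0 : (K : ℝ) ≠ 0 := by positivity
  have h : ∀ j : Fin K, ((1 - ε) / K + if j = a then ε else 0) *
      Real.log (((1 - ε) / K + if j = a then ε else 0) / ((1 : ℝ) / K)) =
      (1 - ε) / K * Real.log (1 - ε) + if j = a then
        (((1 + ε * ((K : ℝ) - 1)) / K) * Real.log (1 + ε * ((K : ℝ) - 1))
          - (1 - ε) / K * Real.log (1 - ε)) else 0 := by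
    intro j
    split_ifs
    · have e : ((1 - ε) / K + ε) = (1 + ε * ((K : ℝ) - 1)) / K := by field_simp; ring
      have e2 : (1 + ε * ((K : ℝ) - 1)) / K / (1 / K) = 1 + ε * ((K : ℝ) - 1) := by field_simp
      rw [e, e2]; ring
    · have e2 : (1 - ε) / K / (1 / (K : ℝ)) = 1 - ε := by field_simp
      rw [add_zero, e2, add_zero]
  rw [Finset.sum_congr rfl (fun j _ => h j), Finset.sum_add_distrib]
  simp
  field_simp
  ring

/-- For the ε-uniform structure (`θ_a(j) = (1-ε)/K + ε·1{j=a}`),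
`D*(Θ) = ((K-1)/K)(1-ε)log(1-ε) + ((1+ε(K-1))/K)log(1+ε(K-1))` (with `0·log 0 = 0`),
and the infimum defining `D*(Θ)` is attained at the uniform distribution on `[K]`. -/
theorem Dstar_eps_uniform {K : ℕ} (hK : 2 ≤ K) (ε : ℝ) (hε0 : 0 ≤ ε) (hε1 : ε ≤ 1) :
    (⨆ a : Fin K,
        KL (fun j => (1 - ε) / K + if j = a then ε else 0) (fun _ => (1 : ℝ) / K)) =
      ENNReal.ofReal ((((K : ℝ) - 1) / K) * (1 - ε) * Real.log (1 - ε) +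
        ((1 + ε * ((K : ℝ) - 1)) / K) * Real.log (1 + ε * ((K : ℝ) - 1))) ∧
    DstarF (fun (a : Fin K) (j : Fin K) => (1 - ε) / K + if j = a then ε else 0) =
      ENNReal.ofReal ((((K : ℝ) - 1) / K) * (1 - ε) * Real.log (1 - ε) +
        ((1 + ε * ((K : ℝ) - 1)) / K) * Real.log (1 + ε * ((K : ℝ) - 1))) := by
  have hK0 : (0 : ℝ) < K := by positivity
  have hnn : ∀ a j : Fin K, 0 ≤ ((1 - ε) / K + if j = a then ε else 0) := by
    intro a j
    have : 0 ≤ (1 - ε) / K := div_nonneg (by linarith) hK0.le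
    split_ifs <;> linarith
  haveI : Nonempty (Fin K) := ⟨⟨0, by omega⟩⟩
  have h1 : (⨆ a : Fin K,
        KL (fun j => (1 - ε) / K + if j = a then ε else 0) (fun _ => (1 : ℝ) / K)) =
      ENNReal.ofReal ((((K : ℝ) - 1) / K) * (1 - ε) * Real.log (1 - ε) +
        ((1 + ε * ((K : ℝ) - 1)) / K) * Real.log (1 + ε * ((K : ℝ) - 1))) := by
    have : ∀ a : Fin K,
        KL (fun j => (1 - ε) / K + if j = a then ε else 0) (fun _ => (1 : ℝ) / K) =
      ENNReal.ofReal ((((K : ℝ) - 1) / K) * (1 - ε) * Real.log (1 - ε) +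
        ((1 + ε * ((K : ℝ) - 1)) / K) * Real.log (1 + ε * ((K : ℝ) - 1))) := by
      intro a
      unfold KL
      rw [if_pos, KL_filter _ _ (hnn a), sum_unif hK]
      intro j hj
      exact absurd hj (by positivity)
    simp only [this, ciSup_const]
  refine ⟨h1, le_antisymm ?_ ?_⟩
  · rw [← h1]
    have hu : IsProbVec (fun _ : Fin K => (1 : ℝ) / K) := by
      refine ⟨fun _ => by positivity, ?_⟩
      simp [hK0.ne']
    exact iInf_le _ (⟨_, hu⟩ : {τ : Fin K → ℝ // IsProbVec τ})
  · refine le_iInf ?_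
    rintro ⟨τ, hτ0, hτ1⟩
    obtain ⟨a, -, ha⟩ : ∃ a ∈ (Finset.univ : Finset (Fin K)), τ a ≤ 1 / K := by
      apply Finset.exists_le_of_sum_le Finset.univ_nonempty
      rw [hτ1]; simp [hK0.ne']
    refine le_trans ?_ (le_iSup _ a)
    unfold KL
    split_ifs with hz
    · rw [KL_filter _ _ (hnn a)]
      apply ENNReal.ofReal_le_ofReal
      rw [← sum_unif hK ε a]
      set p : Fin K → ℝ := fun j => (1 - ε) / K + if j = a then ε else 0 with hp
      have hterm : ∀ j, p j * Real.log (p j / (1 / K)) - p j * (K * τ j - 1)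
          ≤ p j * Real.log (p j / τ j) := by
        intro j
        rcases (hnn a j).lt_or_eq with h | h
        · have hpj : 0 < p j := h
          have hτj : 0 < τ j := lt_of_le_of_ne (hτ0 j) (fun h0 => hpj.ne' (hz j h0.symm))
          have hl := Real.log_le_sub_one_of_pos (mul_pos hK0 hτj)
          rw [Real.log_mul hK0.ne' hτj.ne'] at hl
          rw [Real.log_div hpj.ne' hτj.ne', Real.log_div hpj.ne' (by positivity), one_div,
            Real.log_inv, ← mul_sub]
          apply mul_le_mul_of_nonneg_left _ hpj.le
          linarith
        · have hpj : p j = 0 := h.symm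
          simp [hpj]
      have hs : ∑ j, p j * (K * τ j - 1) = ε * (K * τ a - 1) := by
        have : ∀ j, p j * (K * τ j - 1) = (1 - ε) / K * (K * τ j - 1) +
            if j = a then ε * (K * τ a - 1) else 0 := by
          intro j
          simp only [hp]
          split_ifs with h
          · subst h; ring
          · ring
        rw [Finset.sum_congr rfl (fun j _ => this j), Finset.sum_add_distrib, ← Finset.mul_sum,
          Finset.sum_sub_distrib, ← Finset.mul_sum, hτ1]
        simp
      have hs0 : ε * (K * τ a - 1) ≤ 0 := by
        apply mul_nonpos_of_nonneg_of_nonpos hε0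
        rw [le_div_iff₀ hK0] at ha
        linarith
      have hsum := Finset.sum_le_sum (fun j (_ : j ∈ Finset.univ) => hterm j)
      rw [Finset.sum_sub_distrib, hs] at hsum
      change ∑ j, p j * Real.log (p j / (1 / K)) ≤ ∑ j, p j * Real.log (p j / τ j)
      linarith
    · exact le_top
end
end

section
/- For the radially symmetric uniform structure, D*(Θ) = ((M−V)/M)·log N, and the infimum defining D*(Θ) is attained at the uniform mixture (1/N) Σ_{θ∈Θ} θ. -/
open Finset

noncomputable section

/-- For the radially symmetric uniform structure, `D*(Θ) = ((M-V)/M)·log N`, and the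
infimum defining `D*(Θ)` is attained at the uniform mixture `(1/N)∑_θ θ`. -/
theorem Dstar_radially_symmetric {K N M V : ℕ} (hN : 2 ≤ N) (hM : 0 < M) (hVM : V ≤ M)
    (θ : ℕ → Fin K → ℝ) (U : ℕ → Finset (Fin K)) (C : Finset (Fin K))
    (hUcard : ∀ i < N, (U i).card = M) (hCcard : C.card = V)
    (hunif : ∀ i < N, ∀ j, θ i j = if j ∈ U i then (1 : ℝ) / M else 0)
    (hinter : ∀ i < N, ∀ i' < N, i ≠ i' → U i ∩ U i' = C)
    (hcov : ∀ j : Fin K, ∃ i < N, j ∈ U i) :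
    (⨆ i ∈ Finset.range N,
        KL (θ i) (fun j => (1 / (N : ℝ)) * ∑ k ∈ Finset.range N, θ k j)) =
      ENNReal.ofReal ((((M : ℝ) - V) / M) * Real.log N) ∧
    Dstar K N θ = ENNReal.ofReal ((((M : ℝ) - V) / M) * Real.log N) := by
  have hN0 : (0:ℝ) < N := by exact_mod_cast (by omega : 0 < N)
  have hM0 : (0:ℝ) < M := by exact_mod_cast hM
  set t : Fin K → ℝ := fun j => (1 / (N : ℝ)) * ∑ k ∈ Finset.range N, θ k j with ht
  set d : ℝ := (((M : ℝ) - V) / M) * Real.log N with hd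
  have hCU : ∀ i < N, C ⊆ U i := by
    intro i hi
    obtain ⟨i', hi', hne⟩ : ∃ i' < N, i ≠ i' := by
      by_cases h : i = 0
      · exact ⟨1, by omega, by omega⟩
      · exact ⟨0, by omega, h⟩
    rw [← hinter i hi i' hi' hne]
    exact Finset.inter_subset_left
  have hθ0 : ∀ i < N, ∀ j, 0 ≤ θ i j := by
    intro i hi j
    rw [hunif i hi j]
    split_ifs <;> positivity
  have hfilt : ∀ i < N, Finset.univ.filter (fun j : Fin K => 0 < θ i j) = U i := by
    intro i hi
    ext j
    simp only [Finset.mem_filter, Finset.mem_univ, true_and]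
    rw [hunif i hi j]
    split_ifs with h
    · simp [h, hM]
    · simp [h]
  have hθsum : ∀ i < N, ∑ j, θ i j = 1 := by
    intro i hi
    rw [Finset.sum_congr rfl (fun j _ => hunif i hi j)]
    rw [Finset.sum_ite_mem, Finset.univ_inter, Finset.sum_const, hUcard i hi, nsmul_eq_mul]
    field_simp
  have htC : ∀ j ∈ C, t j = 1 / M := by
    intro j hj
    have : ∑ k ∈ Finset.range N, θ k j = ∑ k ∈ Finset.range N, (1:ℝ)/M := by
      refine Finset.sum_congr rfl fun k hk => ?_
      have hk := Finset.mem_range.1 hk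
      rw [hunif k hk j, if_pos (hCU k hk hj)]
    simp only [ht, this, Finset.sum_const, Finset.card_range, nsmul_eq_mul]
    field_simp
  have htU : ∀ i < N, ∀ j ∈ U i, j ∉ C → t j = 1 / N * (1 / M) := by
    intro i hi j hj hjC
    have : ∑ k ∈ Finset.range N, θ k j = θ i j := by
      refine Finset.sum_eq_single_of_mem i (Finset.mem_range.2 hi) fun k hk hne => ?_
      have hk := Finset.mem_range.1 hk
      rw [hunif k hk j, if_neg]
      intro hjk
      apply hjC
      rw [← hinter k hk i hi hne]
      exact Finset.mem_inter.2 ⟨hjk, hj⟩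
    simp only [ht, this]
    rw [hunif i hi j, if_pos hj]
  have htpos : ∀ j, 0 < t j := by
    intro j
    obtain ⟨i, hi, hj⟩ := hcov j
    by_cases h : j ∈ C
    · rw [htC j h]; positivity
    · rw [htU i hi j hj h]; positivity
  have htsum : ∑ j, t j = 1 := by
    simp only [ht]
    rw [← Finset.mul_sum, Finset.sum_comm,
      Finset.sum_congr rfl (fun k hk => hθsum k (Finset.mem_range.1 hk))]
    simp
    field_simp
  have hS : ∀ i < N, ∑ j ∈ U i, θ i j * Real.log (θ i j / t j) = d := by
    intro i hi
    rw [← Finset.sum_sdiff (hCU i hi)]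
    have h1 : ∑ j ∈ C, θ i j * Real.log (θ i j / t j) = 0 := by
      refine Finset.sum_eq_zero fun j hj => ?_
      rw [htC j hj, hunif i hi j, if_pos (hCU i hi hj), div_self (by positivity)]
      simp
    have h2 : ∑ j ∈ U i \ C, θ i j * Real.log (θ i j / t j)
        = ∑ j ∈ U i \ C, 1 / (M:ℝ) * Real.log N := by
      refine Finset.sum_congr rfl fun j hj => ?_
      obtain ⟨hj, hjC⟩ := Finset.mem_sdiff.1 hj
      rw [htU i hi j hj hjC, hunif i hi j, if_pos hj]
      congr 2
      field_simp
    rw [h1, h2, Finset.sum_const, Finset.card_sdiff_of_subset (hCU i hi), hUcard i hi, hCcard,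
      nsmul_eq_mul, Nat.cast_sub hVM, hd]
    ring
  have hKLt : ∀ i < N, KL (θ i) t = ENNReal.ofReal d := by
    intro i hi
    unfold KL
    rw [if_pos (fun j hj => absurd hj (htpos j).ne'), hfilt i hi, hS i hi]
  have hsup : (⨆ i ∈ Finset.range N, KL (θ i) t) = ENNReal.ofReal d := by
    apply le_antisymm
    · exact iSup₂_le fun i hi => (hKLt i (Finset.mem_range.1 hi)).le
    · rw [← hKLt 0 (by omega)]
      exact le_iSup₂_of_le 0 (Finset.mem_range.2 (by omega)) le_rfl
  refine ⟨hsup, le_antisymm ?_ ?_⟩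
  · unfold Dstar
    exact (iInf_le _ ⟨t, fun j => (htpos j).le, htsum⟩).trans hsup.le
  · unfold Dstar
    refine le_iInf fun τ => ?_
    obtain ⟨τ, hτ0, hτ1⟩ := τ
    show ENNReal.ofReal d ≤ ⨆ i ∈ Finset.range N, KL (θ i) τ
    by_cases hac : ∀ i < N, ∀ j, τ j = 0 → θ i j = 0
    swap
    · push Not at hac
      obtain ⟨i, hi, j, hj, hne⟩ := hac
      refine le_iSup₂_of_le i (Finset.mem_range.2 hi) ?_
      unfold KL
      rw [if_neg (fun h => hne (h j hj))]
      exact le_top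
    have key : ∀ i < N, d + ∑ j, θ i j * (1 - τ j / t j)
        ≤ ∑ j ∈ U i, θ i j * Real.log (θ i j / τ j) := by
      intro i hi
      have h0 : ∑ j, θ i j * (1 - τ j / t j) = ∑ j ∈ U i, θ i j * (1 - τ j / t j) := by
        symm
        refine Finset.sum_subset (Finset.subset_univ _) fun j _ hj => ?_
        rw [hunif i hi j, if_neg hj, zero_mul]
      rw [h0, ← hS i hi, ← Finset.sum_add_distrib]
      refine Finset.sum_le_sum fun j hj => ?_
      rw [← mul_add]
      refine mul_le_mul_of_nonneg_left ?_ (hθ0 i hi j)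
      have hp : 0 < θ i j := by rw [hunif i hi j, if_pos hj]; positivity
      have hτp : 0 < τ j := lt_of_le_of_ne (hτ0 j) fun h => hp.ne' (hac i hi j h.symm)
      have hl := Real.log_le_sub_one_of_pos (div_pos hτp (htpos j))
      rw [Real.log_div hτp.ne' (htpos j).ne'] at hl
      rw [Real.log_div hp.ne' (htpos j).ne', Real.log_div hp.ne' hτp.ne']
      linarith
    have hzero : ∑ i ∈ Finset.range N, ∑ j, θ i j * (1 - τ j / t j) = 0 := by
      rw [Finset.sum_comm]
      have : ∀ j ∈ (Finset.univ : Finset (Fin K)),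
          ∑ i ∈ Finset.range N, θ i j * (1 - τ j / t j) = N * (t j - τ j) := by
        intro j _
        rw [← Finset.sum_mul]
        have h1 : ∑ i ∈ Finset.range N, θ i j = N * t j := by
          simp only [ht]
          field_simp
        rw [h1]
        have := (htpos j).ne'
        field_simp
      rw [Finset.sum_congr rfl this, ← Finset.mul_sum, Finset.sum_sub_distrib, htsum, hτ1]
      simp
    obtain ⟨i, hi, hge⟩ : ∃ i ∈ Finset.range N, 0 ≤ ∑ j, θ i j * (1 - τ j / t j) := by
      apply Finset.exists_le_of_sum_le (f := fun _ => (0:ℝ))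
      · exact ⟨0, Finset.mem_range.2 (by omega)⟩
      · rw [hzero]; simp
    have hi' := Finset.mem_range.1 hi
    refine le_iSup₂_of_le i hi ?_
    unfold KL
    rw [if_pos (hac i hi'), hfilt i hi']
    exact ENNReal.ofReal_le_ofReal (by linarith [key i hi'])
end
end

section
/- For every integer K ≥ 2 and every ε ∈ (0,1), (K−1)(1−ε)·log(1−ε) + (1+ε(K−1))·log(1+ε(K−1)) < ε·K·log K; that is, for the ε-uniform structure the quantity K·D*(Θ) is strictly smaller than ε·K·log K (while the two sides coincide at ε = 0 and ε = 1). -/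
noncomputable section

/-- For every integer `K ≥ 2` and every `ε ∈ (0,1)`,
`(K-1)(1-ε)log(1-ε) + (1+ε(K-1))log(1+ε(K-1)) < εK log K`, i.e. for the ε-uniform
structure `K·D*(Θ)` is strictly smaller than `εK log K`; the two sides coincide at the
endpoints `ε = 0` and `ε = 1` (with the convention `0·log 0 = 0`, which agrees with
`Real.log 0 = 0`). -/
theorem eps_uniform_KDstar_lt (K : ℕ) (hK : 2 ≤ K) :
    (∀ ε : ℝ, 0 < ε → ε < 1 →
      ((K : ℝ) - 1) * (1 - ε) * Real.log (1 - ε) +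
          (1 + ε * ((K : ℝ) - 1)) * Real.log (1 + ε * ((K : ℝ) - 1)) <
        ε * K * Real.log K) ∧
    ((K : ℝ) - 1) * (1 - 0) * Real.log (1 - 0) +
        (1 + 0 * ((K : ℝ) - 1)) * Real.log (1 + 0 * ((K : ℝ) - 1)) =
      0 * (K : ℝ) * Real.log K ∧
    ((K : ℝ) - 1) * (1 - 1) * Real.log (1 - 1) +
        (1 + 1 * ((K : ℝ) - 1)) * Real.log (1 + 1 * ((K : ℝ) - 1)) =
      1 * (K : ℝ) * Real.log K := by
  have hK' : (2 : ℝ) ≤ K := by exact_mod_cast hK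
  refine ⟨?_, by simp, by simp⟩
  intro ε h0 h1
  have hlog : Real.log (1 - ε) < 0 := Real.log_neg (by linarith) (by linarith)
  have hneg : ((K : ℝ) - 1) * (1 - ε) * Real.log (1 - ε) < 0 :=
    mul_neg_of_pos_of_neg (mul_pos (by linarith) (by linarith)) hlog
  have hc := Real.convexOn_mul_log.2 (show (1 : ℝ) ∈ Set.Ici 0 by simp)
    (show (K : ℝ) ∈ Set.Ici 0 by simp)
    (show (0 : ℝ) ≤ 1 - ε by linarith) h0.le (by ring)
  simp only [smul_eq_mul, Real.log_one, mul_zero, zero_add] at hc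
  have e : (1 - ε) * 1 + ε * (K : ℝ) = 1 + ε * ((K : ℝ) - 1) := by ring
  rw [e, ← mul_assoc ε] at hc
  linarith
end
end
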